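/- Let Ω ⊆ ℝ be a bounded measurable set of Lebesgue measure 1 and Λ ⊆ ℝ. The family of exponentials E(Λ) = {e_λ : λ ∈ Λ} is orthonormal in L²(Ω) if and only if the packing condition holds: ∑_{λ∈Λ} |χ̂_Ω(x - λ)|² ≤ 1 for almost every x ∈ ℝ. -/

import Mathlib

open MeasureTheory Set
open scoped ENNReal NNReal

/-- The exponential function `e_λ(x) = exp(2πiλx)`. -/
noncomputable def expF (lam : ℝ) : ℝ → ℂ :=
  fun x => Complex.exp (2 * (Real.pi : ℂ) * Complex.I * (lam : ℂ) * (x : ℂ))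

/-- The Fourier transform of the indicator function of `Ω`. -/
noncomputable def ftChi (Ω : Set ℝ) (ξ : ℝ) : ℂ :=
  ∫ x in Ω, Complex.exp (-(2 * (Real.pi : ℂ) * Complex.I * (ξ : ℂ) * (x : ℂ)))

/-- The family of exponentials `E(Λ)` is orthonormal in `L²(Ω)`. -/
def ExpOrthonormal (Ω Λ : Set ℝ) : Prop :=
  ∃ F : Λ → Lp ℂ 2 (volume.restrict Ω),
    (∀ l : Λ, ⇑(F l) =ᵐ[volume.restrict Ω] expF (l : ℝ)) ∧
    Orthonormal ℂ F

lemma expF_norm (l x : ℝ) : ‖expF l x‖ = 1 := by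
  unfold expF
  rw [show (2 * (Real.pi : ℂ) * Complex.I * (l : ℂ) * (x : ℂ))
    = ((2 * Real.pi * l * x : ℝ) : ℂ) * Complex.I by push_cast; ring]
  exact Complex.norm_exp_ofReal_mul_I _

lemma expF_cont (l : ℝ) : Continuous (expF l) := by
  unfold expF; fun_prop

lemma expF_memLp (Ω : Set ℝ) (hvol : volume Ω = 1) (l : ℝ) :
    MemLp (expF l) 2 (volume.restrict Ω) := by
  have : IsFiniteMeasure (volume.restrict Ω) := ⟨by simp [hvol]⟩
  exact MemLp.of_bound (expF_cont l).aestronglyMeasurable 1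
    (Filter.Eventually.of_forall fun x => (expF_norm l x).le)

lemma inner_expF (Ω : Set ℝ) (hvol : volume Ω = 1) (x y : ℝ) :
    inner ℂ ((expF_memLp Ω hvol x).toLp) ((expF_memLp Ω hvol y).toLp) = ftChi Ω (x - y) := by
  rw [L2.inner_def]
  unfold ftChi
  apply integral_congr_ae
  filter_upwards [(expF_memLp Ω hvol x).coeFn_toLp, (expF_memLp Ω hvol y).coeFn_toLp] with t h1 h2
  rw [h1, h2, RCLike.inner_apply]
  unfold expF
  rw [← Complex.exp_conj, ← Complex.exp_add]
  congr 1
  have h2c : (starRingEnd ℂ) 2 = 2 := Complex.conj_ofNat 2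
  simp [h2c]
  ring

lemma ftChi_zero (Ω : Set ℝ) (hvol : volume Ω = 1) : ftChi Ω 0 = 1 := by
  simp [ftChi, Measure.real, hvol]

lemma ftChi_cont (Ω : Set ℝ) (hvol : volume Ω = 1) : Continuous (ftChi Ω) := by
  have : IsFiniteMeasure (volume.restrict Ω) := ⟨by simp [hvol]⟩
  unfold ftChi
  apply continuous_of_dominated (bound := fun _ => 1)
  · intro x
    exact Continuous.aestronglyMeasurable (by fun_prop)
  · intro x
    refine Filter.Eventually.of_forall fun t => ?_
    have := expF_norm (-x) t
    unfold expF at this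
    rw [← this]
    apply le_of_eq
    congr 2
    push_cast
    ring
  · exact integrable_const _
  · exact Filter.Eventually.of_forall fun t => by fun_prop

lemma norm_toLp_expF (Ω : Set ℝ) (hvol : volume Ω = 1) (x : ℝ) :
    ‖(expF_memLp Ω hvol x).toLp‖ = 1 := by
  have h := inner_expF Ω hvol x x
  rw [sub_self, ftChi_zero Ω hvol, inner_self_eq_norm_sq_to_K] at h
  have h2 : ‖(expF_memLp Ω hvol x).toLp‖ ^ 2 = 1 := by
    have h3 := congrArg Complex.re h
    rw [← RCLike.ofReal_pow] at h3
    exact h3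
  exact (pow_eq_one_iff_of_nonneg (norm_nonneg _) two_ne_zero).1 h2

lemma coe_sum_le_iff {ι : Type*} (s : Finset ι) (f : ι → ℂ) :
    ∑ i ∈ s, ((‖f i‖₊ : ℝ≥0∞)) ^ 2 ≤ 1 ↔ ∑ i ∈ s, ‖f i‖ ^ 2 ≤ 1 := by
  have h1 : ∑ i ∈ s, ((‖f i‖₊ : ℝ≥0∞)) ^ 2 = ((∑ i ∈ s, ‖f i‖₊ ^ 2 : ℝ≥0) : ℝ≥0∞) := by
    push_cast; rfl
  rw [h1, ENNReal.coe_le_one_iff, ← NNReal.coe_le_coe]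
  push_cast
  rfl

/-- Orthonormality of `E(Λ)` in `L²(Ω)` is equivalent to the packing condition
`∑_{λ∈Λ} |χ̂_Ω(x-λ)|² ≤ 1` a.e. -/
theorem orthonormal_iff_packing (Ω : Set ℝ)
    (hbd : Bornology.IsBounded Ω) (hmeas : MeasurableSet Ω)
    (hvol : volume Ω = 1) (Λ : Set ℝ) :
    ExpOrthonormal Ω Λ ↔
      ∀ᵐ x : ℝ, ∑' l : Λ, ((‖ftChi Ω (x - (l : ℝ))‖₊ : ℝ≥0∞)) ^ 2 ≤ 1 := by
  constructor
  · rintro ⟨F, hF, hO⟩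
    have hFE : ∀ l : Λ, F l = (expF_memLp Ω hvol l).toLp := fun l =>
      Lp.ext ((hF l).trans (expF_memLp Ω hvol l).coeFn_toLp.symm)
    refine Filter.Eventually.of_forall fun x => ?_
    rw [ENNReal.tsum_eq_iSup_sum]
    refine iSup_le fun s => (coe_sum_le_iff s _).2 ?_
    have h := hO.sum_inner_products_le (x := (expF_memLp Ω hvol x).toLp) (s := s)
    rw [norm_toLp_expF Ω hvol, one_pow] at h
    refine le_trans (le_of_eq ?_) h
    refine Finset.sum_congr rfl fun l _ => ?_
    rw [norm_inner_symm, hFE, inner_expF Ω hvol]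
  · intro h
    have hall : ∀ (s : Finset Λ) (x : ℝ), ∑ l ∈ s, ‖ftChi Ω (x - (l : ℝ))‖ ^ 2 ≤ 1 := by
      intro s
      have hc : IsClosed {x : ℝ | ∑ l ∈ s, ‖ftChi Ω (x - (l : ℝ))‖ ^ 2 ≤ 1} := by
        have := ftChi_cont Ω hvol
        exact isClosed_le (by fun_prop) continuous_const
      have hd : Dense {x : ℝ | ∑ l ∈ s, ‖ftChi Ω (x - (l : ℝ))‖ ^ 2 ≤ 1} := by
        apply Measure.dense_of_ae (μ := (volume : Measure ℝ))
        filter_upwards [h] with x hx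
        exact (coe_sum_le_iff s _).1 ((ENNReal.sum_le_tsum s).trans hx)
      intro x
      have : x ∈ closure {x : ℝ | ∑ l ∈ s, ‖ftChi Ω (x - (l : ℝ))‖ ^ 2 ≤ 1} := hd x
      rwa [hc.closure_eq] at this
    refine ⟨fun l => (expF_memLp Ω hvol l).toLp, fun l => (expF_memLp Ω hvol l).coeFn_toLp,
      fun l => norm_toLp_expF Ω hvol l, ?_⟩
    intro l m hlm
    change inner ℂ ((expF_memLp Ω hvol l).toLp) ((expF_memLp Ω hvol m).toLp) = 0
    rw [inner_expF Ω hvol]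
    classical
    have h2 := hall {l, m} l
    rw [Finset.sum_pair hlm, sub_self, ftChi_zero Ω hvol] at h2
    have h3 : ‖ftChi Ω ((l : ℝ) - m)‖ ^ 2 ≤ 0 := by
      rw [norm_one] at h2; linarith
    have h4 : ‖ftChi Ω ((l : ℝ) - m)‖ = 0 :=
      pow_eq_zero_iff two_ne_zero |>.1 (le_antisymm h3 (sq_nonneg _))
    exact norm_eq_zero.1 h4
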